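/- There exists a universal constant C_* > 0 with the following property. Fix integers N ≥ 1 and κ ≥ 1 and a real ζ > 1 such that 2π√3 ζ / κ ≤ 1/3 and ζ⁴ (2π√3 ζ)^N / κ^N ≤ 1. Let p ∈ {1, 2}, let f: ℝ³ → ℝ be a 2π-periodic (in each coordinate) function of class C^{N+4} for which there is a constant C_f > 0 with ‖D^j f‖_{L^p(T³)} ≤ C_f ζ^j for all 0 ≤ j ≤ N + 4, and let g: ℝ³ → ℝ be a measurable function that is (2π/κ)-periodic in each coordinate with g ∈ L^p(T³). Then ‖f g‖_{L^p(T³)} ≤ C_f C_* ‖g‖_{L^p(T³)}. -/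

import Mathlib

/-!
STATEMENT 12: The L^p decorrelation lemma: there is a universal constant C_* such that
for N, κ ≥ 1, ζ > 1 with 2π√3 ζ/κ ≤ 1/3 and ζ⁴(2π√3 ζ)^N/κ^N ≤ 1, p ∈ {1,2},
any 2π-periodic f ∈ C^{N+4} with ‖D^j f‖_{L^p} ≤ C_f ζ^j for 0 ≤ j ≤ N+4, and any
(2π/κ)-periodic g ∈ L^p(T³), one has ‖fg‖_{L^p(T³)} ≤ C_f C_* ‖g‖_{L^p(T³)}.
-/

noncomputable section

open MeasureTheory Real
open scoped ENNReal

/-- The fundamental domain [−π,π]³ of the torus T³. -/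
def dom : Set (Fin 3 → ℝ) := Set.Icc (fun _ => -π) (fun _ => π)

/-- A function on ℝ³ is `T`-periodic in each coordinate. -/
def PeriodicWith (T : ℝ) (f : (Fin 3 → ℝ) → ℝ) : Prop :=
  ∀ (x : Fin 3 → ℝ) (i : Fin 3), f (x + T • (Pi.single i 1 : Fin 3 → ℝ)) = f x

lemma per_shift {T : ℝ} (hT : 0 < T) {v : ℝ → ℝ≥0∞} (hv : Function.Periodic v T) (a b : ℝ) :
    ∫⁻ t in Set.Ioc a (a + T), v t = ∫⁻ t in Set.Ioc b (b + T), v t :=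
  (isAddFundamentalDomain_Ioc hT a).setLIntegral_eq (isAddFundamentalDomain_Ioc hT b) v
    hv.map_vadd_zmultiples

lemma shift_Ioc (F : ℝ → ℝ≥0∞) (a b s : ℝ) :
    ∫⁻ t in Set.Ioc a b, F (t + s) = ∫⁻ t in Set.Ioc (a + s) (b + s), F t := by
  have := (measurePreserving_add_right (volume : Measure ℝ) s).setLIntegral_comp_preimage_emb
    (measurableEmbedding_addRight s) F (Set.Ioc (a + s) (b + s))
  rw [← this]
  simp

lemma per_nat {h : ℝ} (hh : 0 < h) {v : ℝ → ℝ≥0∞} (hv : Function.Periodic v h) (a b : ℝ) (n : ℕ) :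
    ∫⁻ t in Set.Ioc a (a + n * h), v t = n * ∫⁻ t in Set.Ioc b (b + h), v t := by
  induction n with
  | zero => simp
  | succ n ih =>
    have hn : 0 ≤ n * h := by positivity
    have e : Set.Ioc a (a + (n + 1 : ℕ) * h)
        = Set.Ioc a (a + n * h) ∪ Set.Ioc (a + n * h) (a + n * h + h) := by
      rw [Set.Ioc_union_Ioc_eq_Ioc (by linarith) (by linarith)]
      congr 1; push_cast; ring
    rw [e, lintegral_union measurableSet_Ioc (Set.Ioc_disjoint_Ioc_of_le le_rfl), ih,
      per_shift hh hv (a + n * h) b]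
    push_cast; ring

lemma reflect_per {h : ℝ} (hh : 0 < h) {v : ℝ → ℝ≥0∞} (hv : Function.Periodic v h) (t : ℝ) :
    ∫⁻ s in Set.Ioc 0 h, v (t - s) = ∫⁻ s in Set.Ioc 0 (0 + h), v s := by
  have := (Measure.measurePreserving_sub_left (volume : Measure ℝ) t).setLIntegral_comp_preimage_emb
    (MeasurableEquiv.subLeft t).measurableEmbedding v (Set.Ico (t - h) t)
  have e : (fun x => t - x) ⁻¹' Set.Ico (t - h) t = Set.Ioc 0 h := by
    ext x; simp [and_comm]
  rw [e] at this
  rw [this, ← per_shift hh hv (t - h) 0]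
  simp only [sub_add_cancel]
  exact setLIntegral_congr Ico_ae_eq_Ioc

lemma conv_eq {T h : ℝ} (hT : 0 < T) (hh : 0 < h) {v P : ℝ → ℝ≥0∞}
    (hv : Function.Periodic v T) (hP : Function.Periodic P h) (hP' : Function.Periodic P T)
    (mv : Measurable v) (mP : Measurable P) (a : ℝ) :
    ∫⁻ t in Set.Ioc a (a + T), (∫⁻ s in Set.Ioc 0 h, v (t + s)) * P t
      = (∫⁻ t in Set.Ioc a (a + T), v t) * ∫⁻ s in Set.Ioc 0 (0 + h), P s := by
  calc _ = ∫⁻ t in Set.Ioc a (a + T), ∫⁻ s in Set.Ioc 0 h, v (t + s) * P t := by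
        refine lintegral_congr fun t => ?_
        rw [lintegral_mul_const _ (by fun_prop)]
    _ = ∫⁻ s in Set.Ioc 0 h, ∫⁻ t in Set.Ioc a (a + T), v (t + s) * P t :=
        lintegral_lintegral_swap (by fun_prop)
    _ = ∫⁻ s in Set.Ioc 0 h, ∫⁻ t in Set.Ioc a (a + T), v t * P (t - s) := by
        refine lintegral_congr fun s => ?_
        have := shift_Ioc (fun t => v t * P (t - s)) a (a + T) s
        simp only [add_sub_cancel_right] at this
        rw [this, add_right_comm]
        refine per_shift hT (fun t => ?_) _ _
        rw [hv, add_sub_right_comm, hP']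
    _ = ∫⁻ t in Set.Ioc a (a + T), ∫⁻ s in Set.Ioc 0 h, v t * P (t - s) :=
        lintegral_lintegral_swap (by fun_prop)
    _ = ∫⁻ t in Set.Ioc a (a + T), v t * ∫⁻ s in Set.Ioc 0 (0 + h), P s := by
        refine lintegral_congr fun t => ?_
        rw [lintegral_const_mul _ (by fun_prop), reflect_per hh hP]
    _ = _ := lintegral_mul_const _ mv

lemma lint_pow {h : ℝ} {u : ℝ → ℝ≥0∞} (mu : Measurable u) {q : ℕ}
    (hq : q = 1 ∨ q = 2) :
    ENNReal.ofReal h * (∫⁻ s in Set.Ioc 0 h, u s) ^ q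
      ≤ ENNReal.ofReal h ^ q * ∫⁻ s in Set.Ioc 0 h, u s ^ q := by
  rcases hq with rfl | rfl
  · simp
  · have := ENNReal.lintegral_mul_le_Lp_mul_Lq (volume.restrict (Set.Ioc 0 h))
      (Real.HolderConjugate.two_two) mu.aemeasurable (aemeasurable_const (b := (1 : ℝ≥0∞)))
    have h2 := pow_le_pow_left' this 2
    rw [mul_pow, ← ENNReal.rpow_natCast (_ ^ _) 2, ← ENNReal.rpow_natCast (_ ^ _) 2,
      ← ENNReal.rpow_mul, ← ENNReal.rpow_mul] at h2
    simp at h2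
    rw [sq (ENNReal.ofReal h), mul_assoc, mul_comm (ENNReal.ofReal h) (∫⁻ s in Set.Ioc 0 h, u s ^ 2)]
    gcongr

lemma two_pow {q : ℕ} (hq : q = 1 ∨ q = 2) (a b : ℝ≥0∞) : (a + b) ^ q ≤ 2 * (a ^ q + b ^ q) := by
  rcases hq with rfl | rfl
  · rw [pow_one, pow_one, pow_one, two_mul]; exact le_self_add
  · rcases eq_or_ne a ⊤ with rfl | ha
    · simp
    rcases eq_or_ne b ⊤ with rfl | hb
    · simp
    lift a to NNReal using ha
    lift b to NNReal using hb
    norm_cast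
    exact add_sq_le

lemma sob1 {h : ℝ} (hh : 0 < h) {φ φ' : ℝ → ℝ} (hφ : ∀ t, HasDerivAt φ (φ' t) t)
    (hc : Continuous φ') {q : ℕ} (hq : q = 1 ∨ q = 2) (t : ℝ) :
    ENNReal.ofReal h * ‖φ t‖ₑ ^ q
      ≤ 2 * ∫⁻ s in Set.Ioc 0 h, (‖φ (t + s)‖ₑ ^ q + ENNReal.ofReal h ^ q * ‖φ' (t + s)‖ₑ ^ q) := by
  have cφ : Continuous φ := continuous_iff_continuousAt.2 fun t => (hφ t).continuousAt
  have mφ : Measurable φ := cφ.measurable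
  have mφ' : Measurable φ' := hc.measurable
  set D := ∫⁻ s in Set.Ioc 0 h, ‖φ' (t + s)‖ₑ with hD
  have key : ∀ s ∈ Set.Ioc 0 h, ‖φ t‖ₑ ^ q ≤ 2 * (‖φ (t + s)‖ₑ ^ q + D ^ q) := by
    intro s hs
    refine le_trans ?_ (two_pow hq _ _)
    gcongr
    have e : ∫ r in (0:ℝ)..s, φ' (t + r) = φ (t + s) - φ t := by
      have := intervalIntegral.integral_eq_sub_of_hasDerivAt (a := 0) (b := s)
        (f := fun r => φ (t + r)) (f' := fun r => φ' (t + r))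
        (fun r _ => (hφ (t + r)).comp_const_add t r)
        ((by fun_prop : Continuous fun r => φ' (t + r)).intervalIntegrable _ _)
      simpa using this
    have e2 : φ t = φ (t + s) - ∫ r in (0:ℝ)..s, φ' (t + r) := by rw [e]; ring
    calc ‖φ t‖ₑ = ‖φ (t + s) - ∫ r in (0:ℝ)..s, φ' (t + r)‖ₑ := by rw [← e2]
      _ ≤ ‖φ (t + s)‖ₑ + ‖∫ r in (0:ℝ)..s, φ' (t + r)‖ₑ := enorm_sub_le
      _ ≤ _ := by
        gcongr
        rw [intervalIntegral.integral_of_le hs.1.le]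
        refine (enorm_integral_le_lintegral_enorm _).trans ?_
        exact lintegral_mono_set (Set.Ioc_subset_Ioc_right hs.2)
  calc ENNReal.ofReal h * ‖φ t‖ₑ ^ q = ∫⁻ s in Set.Ioc 0 h, ‖φ t‖ₑ ^ q := by simp [mul_comm]
    _ ≤ ∫⁻ s in Set.Ioc 0 h, 2 * (‖φ (t + s)‖ₑ ^ q + D ^ q) :=
        setLIntegral_mono' measurableSet_Ioc key
    _ = 2 * ((∫⁻ s in Set.Ioc 0 h, ‖φ (t + s)‖ₑ ^ q) + ENNReal.ofReal h * D ^ q) := by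
        rw [lintegral_const_mul _ (by fun_prop), lintegral_add_left (by fun_prop)]
        simp [mul_comm]
    _ ≤ 2 * ((∫⁻ s in Set.Ioc 0 h, ‖φ (t + s)‖ₑ ^ q) +
          ENNReal.ofReal h ^ q * ∫⁻ s in Set.Ioc 0 h, ‖φ' (t + s)‖ₑ ^ q) := by
        refine mul_le_mul_right (add_le_add le_rfl ?_) _
        exact lint_pow (u := fun s => ‖φ' (t + s)‖ₑ) (by fun_prop) hq
    _ = _ := by
        rw [lintegral_add_left (by fun_prop), lintegral_const_mul _ (by fun_prop)]

lemma oneD {h : ℝ} (hh : 0 < h) {κ : ℕ} (hκ : κ * h = 2 * π) {φ φ' : ℝ → ℝ}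
    (hφ : ∀ t, HasDerivAt φ (φ' t) t) (hc : Continuous φ')
    (pφ : Function.Periodic φ (2 * π)) (pφ' : Function.Periodic φ' (2 * π))
    {P : ℝ → ℝ≥0∞} (mP : Measurable P) (hP : Function.Periodic P h)
    {q : ℕ} (hq : q = 1 ∨ q = 2) :
    ENNReal.ofReal π * ∫⁻ t in Set.Ioc (-π) π, ‖φ t‖ₑ ^ q * P t
      ≤ (∫⁻ t in Set.Ioc (-π) π, (‖φ t‖ₑ ^ q + ENNReal.ofReal h ^ q * ‖φ' t‖ₑ ^ q))
        * ∫⁻ t in Set.Ioc (-π) π, P t := by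
  have cφ : Continuous φ := continuous_iff_continuousAt.2 fun t => (hφ t).continuousAt
  have mφ : Measurable φ := cφ.measurable
  have mφ' : Measurable φ' := hc.measurable
  have hP' : Function.Periodic P (2 * π) := by rw [← hκ]; exact hP.nat_mul κ
  have e : π = -π + 2 * π := by ring
  have e1 : ∫⁻ t in Set.Ioc (-π) π, P t = κ * ∫⁻ t in Set.Ioc 0 (0 + h), P t := by
    rw [← per_nat hh hP (-π), hκ, ← e]
  set v : ℝ → ℝ≥0∞ := fun t => ‖φ t‖ₑ ^ q + ENNReal.ofReal h ^ q * ‖φ' t‖ₑ ^ q with hv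
  have pv : Function.Periodic v (2 * π) := fun t => by simp only [hv, pφ t, pφ' t]
  have mv : Measurable v := by fun_prop
  have c := conv_eq two_pi_pos hh pv hP hP' mv mP (-π)
  rw [← e] at c
  have main : ENNReal.ofReal h * ∫⁻ t in Set.Ioc (-π) π, ‖φ t‖ₑ ^ q * P t
      ≤ 2 * ((∫⁻ t in Set.Ioc (-π) π, v t) * ∫⁻ s in Set.Ioc 0 (0 + h), P s) := by
    rw [← c, ← lintegral_const_mul' _ _ (by simp), ← lintegral_const_mul' _ _ (by simp)]
    refine lintegral_mono fun t => ?_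
    rw [← mul_assoc, ← mul_assoc]
    exact mul_le_mul_left (sob1 hh hφ hc hq t) _
  have h2 : 2 * ENNReal.ofReal π = κ * ENNReal.ofReal h := by
    rw [← ENNReal.ofReal_natCast, ← ENNReal.ofReal_mul (by positivity), hκ,
      ENNReal.ofReal_mul (by positivity)]; simp
  rw [← ENNReal.mul_le_mul_iff_right (a := 2) (by simp) (by simp), ← mul_assoc, h2, e1, mul_assoc]
  calc _ ≤ (κ : ℝ≥0∞) * (2 * ((∫⁻ t in Set.Ioc (-π) π, v t) * ∫⁻ s in Set.Ioc 0 (0 + h), P s)) := by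
        gcongr
    _ = _ := by ring

/-- One-dimensional measures. -/
def mu1 : Fin 3 → Measure ℝ := fun _ => volume.restrict (Set.Ioc (-π) π)

instance (i : Fin 3) : SigmaFinite (mu1 i) := by unfold mu1; infer_instance

lemma dom_eq : (volume : Measure (Fin 3 → ℝ)).restrict dom = Measure.pi mu1 := by
  have : dom = Set.univ.pi fun _ : Fin 3 => Set.Icc (-π) π := by
    unfold dom; rw [Set.pi_univ_Icc]
  rw [this, volume_pi, Measure.restrict_pi_pi]
  unfold mu1
  simp only [restrict_Ioc_eq_restrict_Icc]

/-- Periodic weights. -/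
def PerE (T : ℝ) (P : (Fin 3 → ℝ) → ℝ≥0∞) : Prop :=
  ∀ (x : Fin 3 → ℝ) (i : Fin 3), P (x + T • (Pi.single i 1 : Fin 3 → ℝ)) = P x

lemma update_shift (x : Fin 3 → ℝ) (i : Fin 3) (t T : ℝ) :
    Function.update x i (t + T) = Function.update x i t + T • (Pi.single i 1 : Fin 3 → ℝ) := by
  ext j
  by_cases hj : j = i
  · subst hj; simp
  · simp [hj]

lemma shift_update (x : Fin 3 → ℝ) (i j : Fin 3) (hij : j ≠ i) (t T : ℝ) :
    Function.update (x + T • (Pi.single j 1 : Fin 3 → ℝ)) i t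
      = Function.update x i t + T • (Pi.single j 1 : Fin 3 → ℝ) := by
  ext k
  by_cases hk : k = i
  · subst hk; simp [hij.symm]
  · simp [hk]

lemma PerE.marg {T : ℝ} {P : (Fin 3 → ℝ) → ℝ≥0∞} (hP : PerE T P) (i : Fin 3) :
    PerE T (∫⋯∫⁻_{i}, P ∂mu1) := by
  intro x j
  rw [lmarginal_singleton]
  refine lintegral_congr fun t => ?_
  by_cases hj : j = i
  · subst hj
    congr 1
    ext k
    by_cases hk : k = j
    · subst hk; simp
    · simp [hk]
  · rw [shift_update x i j hj, hP]

/-- Rescaled directional derivative. -/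
def dd (h : ℝ) (i : Fin 3) (f : (Fin 3 → ℝ) → ℝ) : (Fin 3 → ℝ) → ℝ :=
  fun x => fderiv ℝ f x (h • (Pi.single i 1 : Fin 3 → ℝ))

lemma dd_periodic {T h : ℝ} {f : (Fin 3 → ℝ) → ℝ} (hf : PeriodicWith T f) (i : Fin 3) :
    PeriodicWith T (dd h i f) := by
  intro x j
  unfold dd
  rw [← fderiv_comp_add_right]
  congr 2
  ext y
  exact hf y j

lemma step {h : ℝ} (hh : 0 < h) {κ : ℕ} (hκ : κ * h = 2 * π) {q : ℕ} (hq : q = 1 ∨ q = 2)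
    {f : (Fin 3 → ℝ) → ℝ} (hf : ContDiff ℝ 1 f) (pf : PeriodicWith (2 * π) f)
    {P : (Fin 3 → ℝ) → ℝ≥0∞} (mP : Measurable P) (hP : PerE h P) (i : Fin 3) :
    ENNReal.ofReal π * ∫⁻ x, ‖f x‖ₑ ^ q * P x ∂Measure.pi mu1
      ≤ (∫⁻ x, ‖f x‖ₑ ^ q * (∫⋯∫⁻_{i}, P ∂mu1) x ∂Measure.pi mu1)
        + ∫⁻ x, ‖dd h i f x‖ₑ ^ q * (∫⋯∫⁻_{i}, P ∂mu1) x ∂Measure.pi mu1 := by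
  have mf : Measurable f := hf.continuous.measurable
  have cd : Continuous (dd h i f) := (hf.continuous_fderiv (by simp)).clm_apply continuous_const
  have md : Measurable (dd h i f) := cd.measurable
  have mP' : Measurable (∫⋯∫⁻_{i}, P ∂mu1) := mP.lmarginal mu1
  have pd := dd_periodic (h := h) pf i
  rw [← lintegral_add_left (by fun_prop), ← lintegral_const_mul' _ _ (by simp)]
  refine lintegral_le_of_lmarginal_le {i} (by fun_prop) (by fun_prop) ?_
  intro x
  simp only [lmarginal_singleton, Function.update_idem]
  set φ : ℝ → ℝ := fun t => f (Function.update x i t) with hφ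
  set φ' : ℝ → ℝ := fun t => fderiv ℝ f (Function.update x i t) (Pi.single i 1) with hφ'
  have hdd : ∀ t, dd h i f (Function.update x i t) = h * φ' t := by
    intro t; simp [dd, hφ']
  have cu : Continuous fun t : ℝ => Function.update x i t := by fun_prop
  have hder : ∀ t, HasDerivAt φ (φ' t) t := by
    intro t
    exact ((hf.differentiable (by simp)) _).hasFDerivAt.comp_hasDerivAt t
      (hasDerivAt_update x i t)
  have cφ' : Continuous φ' :=
    ((hf.continuous_fderiv (by simp)).comp cu).clm_apply continuous_const
  have pφ : Function.Periodic φ (2 * π) := by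
    intro t; simp only [hφ, update_shift]; exact pf _ _
  have pφ' : Function.Periodic φ' (2 * π) := by
    intro t
    have := pd (Function.update x i t) i
    rw [← update_shift, hdd, hdd] at this
    exact mul_left_cancel₀ hh.ne' this
  have key := oneD hh hκ hder cφ' pφ pφ' (P := fun t => P (Function.update x i t))
    (mP.comp (by fun_prop))
    (by intro t; simp only [update_shift]; exact hP _ _) hq
  rw [lintegral_const_mul' _ _ (by simp)]
  refine key.trans (le_of_eq ?_)
  have mφ : Measurable φ := (hf.continuous.comp cu).measurable
  have mφ' : Measurable φ' := cφ'.measurable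
  rw [← lintegral_mul_const _ (by fun_prop)]
  refine lintegral_congr fun t => ?_
  rw [← add_mul, hdd, enorm_mul, mul_pow, Real.enorm_of_nonneg hh.le]
  rfl

/-- Smooth periodic functions with control of rescaled derivatives. -/
def Good (h : ℝ) (q : ℕ) (B : ℝ≥0∞) (n : ℕ) (f : (Fin 3 → ℝ) → ℝ) : Prop :=
  ContDiff ℝ n f ∧ PeriodicWith (2 * π) f ∧ ∀ j ≤ n,
    ENNReal.ofReal h ^ (j * q) * ∫⁻ x, ‖iteratedFDeriv ℝ j f x‖ₑ ^ q ∂Measure.pi mu1 ≤ B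

lemma Good.mono {h : ℝ} {q : ℕ} {B : ℝ≥0∞} {n : ℕ} {f : (Fin 3 → ℝ) → ℝ}
    (hf : Good h q B (n + 1) f) : Good h q B n f :=
  ⟨hf.1.of_le (by exact_mod_cast n.le_succ), hf.2.1, fun j hj => hf.2.2 j (by omega)⟩

lemma Good.dd {h : ℝ} (hh : 0 < h) {q : ℕ} {B : ℝ≥0∞} {n : ℕ} {f : (Fin 3 → ℝ) → ℝ}
    (hf : Good h q B (n + 1) f) (i : Fin 3) : Good h q B n (dd h i f) := by
  have c1 : ContDiff ℝ n (fderiv ℝ f) := hf.1.fderiv_right (by push_cast; exact le_rfl)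
  refine ⟨c1.clm_apply contDiff_const, dd_periodic hf.2.1 i, fun j hj => ?_⟩
  refine le_trans ?_ (hf.2.2 (j + 1) (by omega))
  have : ∀ x, ‖iteratedFDeriv ℝ j (_root_.dd h i f) x‖ₑ
      ≤ ENNReal.ofReal h * ‖iteratedFDeriv ℝ (j + 1) f x‖ₑ := by
    intro x
    have := norm_iteratedFDeriv_clm_apply_const (c := h • (Pi.single i 1 : Fin 3 → ℝ))
      (c1.contDiffAt (x := x)) (n := j) (by exact_mod_cast hj)
    rw [norm_iteratedFDeriv_fderiv, norm_smul, Real.norm_of_nonneg hh.le] at this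
    have e1 : ‖(Pi.single i 1 : Fin 3 → ℝ)‖ = 1 := by rw [Pi.norm_single]; simp
    rw [e1, mul_one] at this
    rw [← ofReal_norm, ← ofReal_norm, ← ENNReal.ofReal_mul hh.le]
    exact ENNReal.ofReal_le_ofReal this
  rw [Nat.add_mul, pow_add, mul_assoc, one_mul]
  refine mul_le_mul_right ?_ _
  rw [← lintegral_const_mul' _ _ (by simp)]
  refine lintegral_mono fun x => ?_
  rw [← mul_pow]
  gcongr
  exact this x

lemma three {h : ℝ} (hh : 0 < h) {κ : ℕ} (hκ : κ * h = 2 * π) {q : ℕ} (hq : q = 1 ∨ q = 2)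
    {B : ℝ≥0∞} {f : (Fin 3 → ℝ) → ℝ} (hf : Good h q B 3 f)
    {P : (Fin 3 → ℝ) → ℝ≥0∞} (mP : Measurable P) (hP : PerE h P) :
    ENNReal.ofReal π ^ 3 * ∫⁻ x, ‖f x‖ₑ ^ q * P x ∂Measure.pi mu1
      ≤ 8 * (B * ∫⁻ x, P x ∂Measure.pi mu1) := by
  set c := ∫⁻ x, P x ∂Measure.pi mu1 with hc
  set P1 := ∫⋯∫⁻_{0}, P ∂mu1 with hP1
  set P2 := ∫⋯∫⁻_{1}, P1 ∂mu1 with hP2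
  have m1 : Measurable P1 := mP.lmarginal mu1
  have m2 : Measurable P2 := m1.lmarginal mu1
  have p1 : PerE h P1 := hP.marg 0
  have p2 : PerE h P2 := p1.marg 1
  have e3 : ∫⋯∫⁻_{2}, P2 ∂mu1 = fun _ => c := by
    rw [hP2, hP1, ← lmarginal_union mu1 P mP (by decide),
      ← lmarginal_union mu1 P mP (by decide)]
    have : ({2} ∪ ({1} ∪ {0}) : Finset (Fin 3)) = Finset.univ := by decide
    rw [this, lmarginal_univ]
  have g0 : ∀ f, Good h q B 0 f → ∫⁻ x, ‖f x‖ₑ ^ q * c ∂Measure.pi mu1 ≤ B * c := by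
    intro f hf
    have mf : Measurable f := hf.1.continuous.measurable
    rw [lintegral_mul_const _ (by fun_prop)]
    gcongr
    have := hf.2.2 0 le_rfl
    simpa [← ofReal_norm] using this
  have g1 : ∀ f, Good h q B 1 f →
      ENNReal.ofReal π * ∫⁻ x, ‖f x‖ₑ ^ q * P2 x ∂Measure.pi mu1 ≤ 2 * (B * c) := by
    intro f hf
    have := step hh hκ hq hf.1 hf.2.1 m2 p2 2
    rw [e3] at this
    refine this.trans ?_
    rw [two_mul]
    exact add_le_add (g0 _ hf.mono) (g0 _ (hf.dd hh 2))
  have g2 : ∀ f, Good h q B 2 f →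
      ENNReal.ofReal π ^ 2 * ∫⁻ x, ‖f x‖ₑ ^ q * P1 x ∂Measure.pi mu1 ≤ 4 * (B * c) := by
    intro f hf
    have := step hh hκ hq hf.mono.1 hf.2.1 m1 p1 1
    rw [pow_succ, pow_one, mul_assoc]
    refine (mul_le_mul_right this _).trans ?_
    rw [mul_add]
    refine (add_le_add (g1 _ hf.mono) (g1 _ (hf.dd hh 1))).trans (le_of_eq ?_)
    ring
  have := step hh hκ hq hf.mono.mono.1 hf.2.1 mP hP 0
  rw [pow_succ, mul_assoc]
  refine (mul_le_mul_right this _).trans ?_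
  rw [mul_add]
  refine (add_le_add (g2 _ hf.mono) (g2 _ (hf.dd hh 0))).trans (le_of_eq ?_)
  ring

lemma eLp_pow {α E : Type*} [MeasurableSpace α] [NormedAddCommGroup E] {μ : Measure α}
    (f : α → E) {q : ℕ} (hq : q ≠ 0) :
    eLpNorm f (q : ℝ≥0∞) μ ^ q = ∫⁻ x, ‖f x‖ₑ ^ q ∂μ := by
  have := eLpNorm_nnreal_pow_eq_lintegral (f := f) (μ := μ) (p := (q : NNReal)) (by simpa using hq)
  simpa using this

theorem Lp_decorrelation :
    ∃ Cstar : ℝ, 0 < Cstar ∧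
      ∀ (N κ : ℕ), 1 ≤ N → 1 ≤ κ →
      ∀ ζ : ℝ, 1 < ζ →
        2 * π * Real.sqrt 3 * ζ / (κ : ℝ) ≤ 1 / 3 →
        ζ ^ 4 * (2 * π * Real.sqrt 3 * ζ) ^ N / (κ : ℝ) ^ N ≤ 1 →
      ∀ p : ℝ≥0∞, p = 1 ∨ p = 2 →
      ∀ (f : (Fin 3 → ℝ) → ℝ), ContDiff ℝ ((N : ℕ∞) + 4) f → PeriodicWith (2 * π) f →
      ∀ Cf : ℝ, 0 < Cf →
        (∀ j : ℕ, j ≤ N + 4 →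
          eLpNorm (fun x => ‖iteratedFDeriv ℝ j f x‖) p (volume.restrict dom)
            ≤ ENNReal.ofReal (Cf * ζ ^ j)) →
      ∀ g : (Fin 3 → ℝ) → ℝ, Measurable g → PeriodicWith (2 * π / (κ : ℝ)) g →
        eLpNorm g p (volume.restrict dom) < ⊤ →
        eLpNorm (fun x => f x * g x) p (volume.restrict dom)
          ≤ ENNReal.ofReal (Cf * Cstar) * eLpNorm g p (volume.restrict dom) := by
  refine ⟨1, one_pos, ?_⟩
  intro N κ hN hκ ζ hζ h1 _ p hp f hf pf Cf hCf hD g mg pg _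
  obtain ⟨q, hq, rfl⟩ : ∃ q : ℕ, (q = 1 ∨ q = 2) ∧ p = q := by
    rcases hp with rfl | rfl
    · exact ⟨1, Or.inl rfl, by simp⟩
    · exact ⟨2, Or.inr rfl, by simp⟩
  have hq0 : q ≠ 0 := by omega
  have hκ0 : (0 : ℝ) < κ := by exact_mod_cast hκ
  set h : ℝ := 2 * π / κ with hh
  have hpos : 0 < h := by positivity
  have hκh : κ * h = 2 * π := by rw [hh]; field_simp
  have hhζ : h * ζ ≤ 1 := by
    have s3 : 1 ≤ Real.sqrt 3 := by rw [Real.one_le_sqrt]; norm_num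
    have e : 2 * π * Real.sqrt 3 * ζ / (κ : ℝ) = h * ζ * Real.sqrt 3 := by rw [hh]; ring
    rw [e] at h1
    nlinarith [mul_pos hpos (lt_trans one_pos hζ)]
  rw [dom_eq] at *
  have good : Good h q (ENNReal.ofReal Cf ^ q) 3 f := by
    refine ⟨hf.of_le ?_, pf, fun j hj => ?_⟩
    · have : ((3 : ℕ) : WithTop ℕ∞) ≤ ((4 : ℕ) : WithTop ℕ∞) := by
        exact_mod_cast (by omega : 3 ≤ 4)
      exact le_trans this le_add_self
    · have := pow_le_pow_left' (hD j (by omega)) q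
      rw [eLp_pow _ hq0] at this
      simp only [enorm_norm] at this
      calc _ ≤ ENNReal.ofReal h ^ (j * q) * ENNReal.ofReal (Cf * ζ ^ j) ^ q := by gcongr
        _ = ENNReal.ofReal (Cf * (h * ζ) ^ j) ^ q := by
          rw [pow_mul, ← mul_pow, ← ENNReal.ofReal_pow hpos.le, ← ENNReal.ofReal_mul (by positivity)]
          congr 2; ring
        _ ≤ _ := by
          gcongr
          exact mul_le_of_le_one_right hCf.le (pow_le_one₀ (by positivity) hhζ)
  have t := three hpos hκh hq good (P := fun x => ‖g x‖ₑ ^ q) (by fun_prop)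
    (by intro x i; simp only [pg x i])
  rw [mul_one]
  have pi8 : (8 : ℝ≥0∞) ≤ ENNReal.ofReal π ^ 3 := by
    rw [← ENNReal.ofReal_pow pi_pos.le, ← ENNReal.ofReal_ofNat]
    apply ENNReal.ofReal_le_ofReal
    have := pow_le_pow_left₀ (by norm_num) pi_gt_three.le 3
    linarith
  have t2 : ∫⁻ x, ‖f x‖ₑ ^ q * ‖g x‖ₑ ^ q ∂Measure.pi mu1
      ≤ ENNReal.ofReal Cf ^ q * ∫⁻ x, ‖g x‖ₑ ^ q ∂Measure.pi mu1 := by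
    rw [← ENNReal.mul_le_mul_iff_right (a := 8) (by simp) (by simp)]
    exact (mul_le_mul_left pi8 _).trans t
  rw [← eLp_pow _ hq0, ← mul_pow] at t2
  refine (ENNReal.pow_le_pow_left_iff hq0).1 ?_
  rw [eLp_pow _ hq0]
  simpa only [enorm_mul, mul_pow] using t2

end
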